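/- There exists an absolute constant ε₀ ∈ (0,1) such that for every real ε ∈ (0, ε₀], every integer t ≥ 1, and every real v > 0 with v ≥ 10·ε·t, one has F(n₀) ≤ −v, where F and n₀ are as defined in the context. -/

import Mathlib

/-- The function `F(n) = -n log(1/ε) - n log 2 + (n+t) log(n+t) - t log t
- ((n-v)/2) log((n-v)/2) - ((n+v)/2) log((n+v)/2)`. -/
noncomputable def Ffun (ε : ℝ) (t : ℕ) (v : ℝ) (n : ℝ) : ℝ :=
  -n * Real.log (1 / ε) - n * Real.log 2 + (n + t) * Real.log (n + t)
    - t * Real.log t - (n - v) / 2 * Real.log ((n - v) / 2)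
    - (n + v) / 2 * Real.log ((n + v) / 2)

/-- The maximizer `n₀ = (tε² + √(ε²t² + v²(1-ε²)))/(1-ε²)` of `F`. -/
noncomputable def nZero (ε : ℝ) (t : ℕ) (v : ℝ) : ℝ :=
  (t * ε ^ 2 + Real.sqrt (ε ^ 2 * t ^ 2 + v ^ 2 * (1 - ε ^ 2))) / (1 - ε ^ 2)

/-!
The identity `(n₀ - v) (n₀ + v) = (ε (n₀ + t))²` is the critical-point equation `F'(n₀) = 0`. It
eliminates `log (n₀ - v)` from `F(n₀)`, after which
`F(n₀) = t log ((n₀ + t) / t) + v log (ε (n₀ + t) / (n₀ + v))`.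
The first term is at most `n₀`. If `ε ≤ q` and `ε t ≤ q v` with `q < 1`, then
`ε (n₀ + t) ≤ q (n₀ + v)`, so the second term is at most `v log q`, and the critical-point equation
gives `n₀ - v ≤ q² (n₀ + v)`, i.e. `n₀ ≤ (1 + q²) / (1 - q²) v`. Finally take `q = 1 / 10`.
-/

section

variable {ε q v n x y : ℝ} {t : ℕ}

theorem mul_log_sub_log_le_sub (hx : 0 < x) (hy : 0 ≤ y) :
    y * (Real.log x - Real.log y) ≤ x - y := by
  rcases hy.eq_or_lt with rfl | hy
  · simpa using hx.le
  calc y * (Real.log x - Real.log y) = y * Real.log (x / y) := by rw [Real.log_div hx.ne' hy.ne']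
    _ ≤ y * (x / y - 1) := by gcongr; exact Real.log_le_sub_one_of_pos (div_pos hx hy)
    _ = x - y := by field_simp

theorem Ffun_eq_of_critical (hε : 0 < ε) (hn : |v| < n)
    (hcrit : (n - v) * (n + v) = (ε * (n + t)) ^ 2) :
    Ffun ε t v n =
      t * (Real.log (n + t) - Real.log t) + v * Real.log (ε * (n + t) / (n + v)) := by
  have hsub : 0 < n - v := by linarith [le_abs_self v]
  have hadd : 0 < n + v := by linarith [neg_abs_le v]
  have hnt : 0 < n + t := add_pos_of_pos_of_nonneg ((abs_nonneg v).trans_lt hn) t.cast_nonneg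
  have hlog : Real.log (n - v) + Real.log (n + v) = 2 * (Real.log ε + Real.log (n + t)) := by
    rw [← Real.log_mul hsub.ne' hadd.ne', hcrit, Real.log_pow, Real.log_mul hε.ne' hnt.ne',
      Nat.cast_ofNat]
  rw [Ffun, one_div, Real.log_inv, Real.log_div hsub.ne' two_ne_zero,
    Real.log_div hadd.ne' two_ne_zero, Real.log_div (mul_pos hε hnt).ne' hadd.ne',
    Real.log_mul hε.ne' hnt.ne']
  linear_combination (-(n - v) / 2) * hlog

theorem nZero_sub_mul_nZero_add (hε : ε ^ 2 < 1) :
    (nZero ε t v - v) * (nZero ε t v + v) = (ε * (nZero ε t v + t)) ^ 2 := by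
  have hpos : 0 < 1 - ε ^ 2 := sub_pos.2 hε
  have hsqrt : nZero ε t v * (1 - ε ^ 2) - t * ε ^ 2 =
      Real.sqrt (ε ^ 2 * t ^ 2 + v ^ 2 * (1 - ε ^ 2)) := by
    rw [nZero, div_mul_cancel₀ _ hpos.ne', add_sub_cancel_left]
  have hsq : (nZero ε t v * (1 - ε ^ 2) - t * ε ^ 2) ^ 2 =
      ε ^ 2 * t ^ 2 + v ^ 2 * (1 - ε ^ 2) := by
    rw [hsqrt, Real.sq_sqrt (by positivity)]
  refine mul_left_cancel₀ hpos.ne' ?_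
  linear_combination hsq

theorem nZero_pos (hε : ε ^ 2 < 1) (hv : v ≠ 0) : 0 < nZero ε t v := by
  have : 0 < 1 - ε ^ 2 := sub_pos.2 hε
  unfold nZero
  positivity

theorem abs_lt_nZero (hε₀ : ε ≠ 0) (hε : ε ^ 2 < 1) (hv : v ≠ 0) : |v| < nZero ε t v := by
  have hn : 0 < nZero ε t v := nZero_pos hε hv
  have hsq : 0 < (ε * (nZero ε t v + t)) ^ 2 := by positivity
  refine abs_lt_of_sq_lt_sq ?_ hn.le
  linarith [nZero_sub_mul_nZero_add (t := t) (v := v) hε]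

theorem le_mul_of_sub_mul_add_le_sq {K : Type*} [Field K] [LinearOrder K] [IsStrictOrderedRing K]
    {n q v : K} (hq : q ^ 2 < 1) (hpos : 0 < n + v) (h : (n - v) * (n + v) ≤ (q * (n + v)) ^ 2) :
    n ≤ (1 + q ^ 2) / (1 - q ^ 2) * v := by
  have hsub : n - v ≤ q ^ 2 * (n + v) := le_of_mul_le_mul_right (by linarith) hpos
  rw [div_mul_eq_mul_div, le_div_iff₀ (sub_pos.2 hq)]
  linarith

theorem Ffun_nZero_le (hε : 0 < ε) (hεq : ε ≤ q) (hq : q < 1) (hv : 0 < v) (ht : ε * t ≤ q * v) :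
    Ffun ε t v (nZero ε t v) ≤ ((1 + q ^ 2) / (1 - q ^ 2) + Real.log q) * v := by
  have hq₀ : 0 < q := hε.trans_le hεq
  have hε_sq : ε ^ 2 < 1 := pow_lt_one₀ hε.le (hεq.trans_lt hq) two_ne_zero
  have hcrit := nZero_sub_mul_nZero_add (t := t) (v := v) hε_sq
  have habs : |v| < nZero ε t v := abs_lt_nZero hε.ne' hε_sq hv.ne'
  have hn : 0 < nZero ε t v := nZero_pos hε_sq hv.ne'
  rw [Ffun_eq_of_critical hε habs hcrit]
  generalize nZero ε t v = n at *
  have hmul : ε * (n + t) ≤ q * (n + v) := by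
    linarith [mul_le_mul_of_nonneg_right hεq hn.le]
  have hn_le : n ≤ (1 + q ^ 2) / (1 - q ^ 2) * v :=
    le_mul_of_sub_mul_add_le_sq (pow_lt_one₀ hq₀.le hq two_ne_zero) (by positivity)
      (hcrit.trans_le (by gcongr))
  have hlog : Real.log (ε * (n + t) / (n + v)) ≤ Real.log q :=
    Real.log_le_log (by positivity) ((div_le_iff₀ (by positivity)).2 hmul)
  calc t * (Real.log (n + t) - Real.log t) + v * Real.log (ε * (n + t) / (n + v))
      ≤ (n + t - t) + v * Real.log q := by
        gcongr
        exact mul_log_sub_log_le_sub (by positivity) t.cast_nonneg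
    _ ≤ ((1 + q ^ 2) / (1 - q ^ 2) + Real.log q) * v := by linarith

end

/-- For `ε` at most a small absolute constant, `t ≥ 1` and
`v ≥ 10·ε·t` with `v > 0`, one has `F(n₀) ≤ −v`. -/
theorem stmt_17 :
    ∃ ε₀ ∈ Set.Ioo (0:ℝ) 1, ∀ ε : ℝ, ε ∈ Set.Ioc (0:ℝ) ε₀ → ∀ t : ℕ, 1 ≤ t →
      ∀ v : ℝ, 0 < v → 10 * ε * t ≤ v → Ffun ε t v (nZero ε t v) ≤ -v := by
  refine ⟨1 / 10, by norm_num, ?_⟩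
  rintro ε ⟨hε, hε_le⟩ t - v hv hvt
  have hlog : Real.log (1 / 10) ≤ -(200 / 99) := by
    rw [one_div, Real.log_inv, Real.log_ten_eq]
    linarith [Real.log_two_gt_d9, Real.log_five_gt_d9]
  calc Ffun ε t v (nZero ε t v)
      ≤ ((1 + (1 / 10) ^ 2) / (1 - (1 / 10) ^ 2) + Real.log (1 / 10)) * v :=
        Ffun_nZero_le hε hε_le (by norm_num) hv (by linarith)
    _ ≤ -1 * v := by
        gcongr
        linarith
    _ = -v := neg_one_mul v
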